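/- arXiv:2102.07091 — 2 statements merged into one kernel-verified Lean document; each statement's English description precedes it below -/
import Mathlib

section
/- Let r ≤ d, let x be a real d×r matrix with xᵀx = I_r, and let ξ be a real d×r matrix with xᵀξ + ξᵀx = 0 and ‖ξ‖_F ≤ 1. Then the polar retraction satisfies the second-order boundedness property with constant M = 1: ‖(x+ξ)(I_r + ξᵀξ)^{-1/2} − (x+ξ)‖_F ≤ ‖ξ‖_F². -/
open Matrix

/-- Frobenius norm of a real matrix. -/
noncomputable def frobNorm {m n : ℕ} (A : Matrix (Fin m) (Fin n) ℝ) : ℝ :=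
  Real.sqrt (∑ i, ∑ j, (A i j) ^ 2)

/-!
Tangency says exactly that `(x + ξ)ᴴ (x + ξ) = 1 + ξᴴ ξ = S²`, so `x + ξ` and `S` have the same Gram
matrix and `(x + ξ) (S⁻¹ - 1)` has the Frobenius norm of `S (S⁻¹ - 1) = 1 - S`. As `S² ≥ 1`, the
matrix `T = S - 1` is positive semidefinite, hence `‖T‖ ≤ tr T`, and taking traces in
`ξᴴ ξ = S² - 1 = 2 T + T²` gives `‖ξ‖² = 2 tr T + ‖T‖² ≥ (1 + ‖T‖)² - 1`. The resulting bound
`√(1 + ‖ξ‖²) - 1` is an equality for `r = 1`, and it is at most `‖ξ‖² / 2`.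
-/

theorem one_le_of_one_le_mul_self {R : Type*} [Ring R] [PartialOrder R] [StarRing R]
    [StarOrderedRing R] {s : R} (hs : 0 ≤ s) (hunit : IsUnit (s + 1)) (h : 1 ≤ s * s) :
    1 ≤ s := by
  have hsa : IsSelfAdjoint s := .of_nonneg hs
  have hsq : 0 ≤ s * s - 1 := sub_nonneg.mpr h
  have hconj : 0 ≤ (s - 1) * (s + 1) * (s - 1) :=
    (hsa.sub (.one R)).conjugate_nonneg (add_nonneg hs zero_le_one)
  -- Congruence by the unit `s + 1` exhibits `s - 1` as a sum of nonnegative elements, so no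
  -- functional calculus is needed.
  have hcongr : star (s + 1) * (s - 1) * (s + 1)
      = (s * s - 1) + (s * s - 1) + (s - 1) * (s + 1) * (s - 1) := by
    rw [(hsa.add (.one R)).star_eq]
    noncomm_ring
  rw [← sub_nonneg, ← hunit.star_left_conjugate_nonneg_iff, hcongr]
  exact add_nonneg (add_nonneg hsq hsq) hconj

theorem conjTranspose_mul_self_add_of_tangent {R m n : Type*} [Semiring R] [StarRing R]
    [Fintype m] [DecidableEq n] {x ξ : Matrix m n R} (hx : xᴴ * x = 1)
    (hξ : xᴴ * ξ + ξᴴ * x = 0) : (x + ξ)ᴴ * (x + ξ) = 1 + ξᴴ * ξ :=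
  calc (x + ξ)ᴴ * (x + ξ) = xᴴ * x + (xᴴ * ξ + ξᴴ * x) + ξᴴ * ξ := by
        rw [conjTranspose_add, Matrix.add_mul, Matrix.mul_add, Matrix.mul_add]
        abel
    _ = 1 + ξᴴ * ξ := by rw [hx, hξ, add_zero]

section Frobenius

open scoped ComplexOrder MatrixOrder Matrix.Norms.Frobenius

variable {𝕜 l m n p : Type*} [RCLike 𝕜] [Fintype l] [Fintype m] [Fintype n] [Fintype p]

theorem frobenius_norm_sq (A : Matrix m n 𝕜) : ‖A‖ ^ 2 = ∑ i, ∑ j, ‖A i j‖ ^ 2 := by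
  simp only [frobenius_norm_def, ← Real.sqrt_eq_rpow, Real.rpow_two]
  exact Real.sq_sqrt (by positivity)

theorem frobNorm_eq_norm {m n : ℕ} (A : Matrix (Fin m) (Fin n) ℝ) : frobNorm A = ‖A‖ := by
  rw [← Real.sqrt_sq (norm_nonneg A), frobenius_norm_sq]
  simp only [frobNorm, Real.norm_eq_abs, sq_abs]

theorem frobenius_norm_sq_eq_re_trace (A : Matrix m n 𝕜) :
    ‖A‖ ^ 2 = RCLike.re (Aᴴ * A).trace := by
  rw [frobenius_norm_sq, Finset.sum_comm]
  simp only [trace, diag_apply, mul_apply, conjTranspose_apply, map_sum, RCLike.star_def,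
    RCLike.conj_mul, ← RCLike.ofReal_pow, RCLike.ofReal_re]

theorem frobenius_norm_mul_eq_of_conjTranspose_mul_self_eq {A : Matrix l n 𝕜} {B : Matrix m n 𝕜}
    (h : Aᴴ * A = Bᴴ * B) (C : Matrix n p 𝕜) : ‖A * C‖ = ‖B * C‖ := by
  have hgram : (A * C)ᴴ * (A * C) = (B * C)ᴴ * (B * C) := by
    simp only [conjTranspose_mul, Matrix.mul_assoc]
    rw [← Matrix.mul_assoc Aᴴ, h, Matrix.mul_assoc]
  rw [← sq_eq_sq₀ (norm_nonneg _) (norm_nonneg _), frobenius_norm_sq_eq_re_trace, hgram,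
    frobenius_norm_sq_eq_re_trace]

theorem frobenius_norm_le_re_trace_of_posSemidef {A : Matrix n n 𝕜} (hA : A.PosSemidef) :
    ‖A‖ ≤ RCLike.re A.trace := by
  classical
  obtain ⟨B, rfl⟩ := CStarAlgebra.nonneg_iff_eq_star_mul_self.mp hA.nonneg
  rw [star_eq_conjTranspose, ← frobenius_norm_sq_eq_re_trace]
  calc ‖Bᴴ * B‖ ≤ ‖Bᴴ‖ * ‖B‖ := frobenius_norm_mul _ _
    _ = ‖B‖ ^ 2 := by rw [frobenius_norm_conjTranspose, sq]

variable [DecidableEq n]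

theorem posSemidef_sub_one_of_mul_self_sub_one {S : Matrix n n 𝕜} (hS : S.PosSemidef)
    (h : (S * S - 1).PosSemidef) : (S - 1).PosSemidef :=
  le_iff.mp <| one_le_of_one_le_mul_self hS.nonneg (PosDef.posSemidef_add hS .one).isUnit
    (le_iff.mpr h)

theorem frobenius_norm_sub_one_le_of_mul_self_eq {S : Matrix n n 𝕜} (hS : S.PosSemidef)
    {ξ : Matrix m n 𝕜} (hSS : S * S = 1 + ξᴴ * ξ) : ‖S - 1‖ ≤ √(1 + ‖ξ‖ ^ 2) - 1 := by
  have hξξ : ξᴴ * ξ = S * S - 1 := eq_sub_of_add_eq' hSS.symm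
  have hT : (S - 1).PosSemidef :=
    posSemidef_sub_one_of_mul_self_sub_one hS (hξξ ▸ posSemidef_conjTranspose_mul_self ξ)
  have hgram : ξᴴ * ξ = (S - 1) + (S - 1) + (S - 1)ᴴ * (S - 1) := by
    rw [hT.isHermitian.eq, hξξ]
    noncomm_ring
  have hnorm : ‖ξ‖ ^ 2 = 2 * RCLike.re (S - 1).trace + ‖S - 1‖ ^ 2 := by
    rw [frobenius_norm_sq_eq_re_trace, hgram, trace_add, trace_add, map_add, map_add,
      ← frobenius_norm_sq_eq_re_trace, two_mul]
  have hsq : (‖S - 1‖ + 1) ^ 2 ≤ 1 + ‖ξ‖ ^ 2 := by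
    linarith [frobenius_norm_le_re_trace_of_posSemidef hT]
  exact le_sub_iff_add_le.mpr (Real.le_sqrt_of_sq_le hsq)

theorem polar_retraction_second_order_bound_general {x ξ : Matrix m n 𝕜} (hx : xᴴ * x = 1)
    (hξ : xᴴ * ξ + ξᴴ * x = 0) {S : Matrix n n 𝕜} (hS : S.PosDef) (hSS : S * S = 1 + ξᴴ * ξ) :
    ‖(x + ξ) * S⁻¹ - (x + ξ)‖ ≤ √(1 + ‖ξ‖ ^ 2) - 1 := by
  have hgram : (x + ξ)ᴴ * (x + ξ) = Sᴴ * S := by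
    rw [conjTranspose_mul_self_add_of_tangent hx hξ, hS.isHermitian.eq, hSS]
  have hdet : IsUnit S.det := (isUnit_iff_isUnit_det S).mp hS.isUnit
  calc ‖(x + ξ) * S⁻¹ - (x + ξ)‖ = ‖(x + ξ) * (S⁻¹ - 1)‖ := by rw [Matrix.mul_sub, Matrix.mul_one]
    _ = ‖S * (S⁻¹ - 1)‖ := frobenius_norm_mul_eq_of_conjTranspose_mul_self_eq hgram _
    _ = ‖S - 1‖ := by rw [mul_sub, mul_nonsing_inv S hdet, mul_one, norm_sub_rev]
    _ ≤ √(1 + ‖ξ‖ ^ 2) - 1 := frobenius_norm_sub_one_le_of_mul_self_eq hS.posSemidef hSS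

end Frobenius

/-- **Second-order boundedness of the polar retraction with constant `M = 1`.**
If `x ∈ St(d,r)`, `ξ` is tangent at `x` with `‖ξ‖_F ≤ 1`, and `S` is the (unique)
positive definite square root of `I + ξᵀξ`, then
`‖(x+ξ) S⁻¹ − (x+ξ)‖_F ≤ ‖ξ‖_F²`. -/
theorem polar_retraction_second_order_bound
    (d r : ℕ) (hdr : r ≤ d) (x ξ : Matrix (Fin d) (Fin r) ℝ)
    (hx : xᵀ * x = 1) (hξ : xᵀ * ξ + ξᵀ * x = 0) (hξnorm : frobNorm ξ ≤ 1) :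
    ∀ S : Matrix (Fin r) (Fin r) ℝ, S.PosDef → S * S = 1 + ξᵀ * ξ →
      frobNorm ((x + ξ) * S⁻¹ - (x + ξ)) ≤ (frobNorm ξ) ^ 2 := by
  intro S hS hSS
  simp only [← conjTranspose_eq_transpose_of_trivial] at hx hξ hSS
  have hsharp := polar_retraction_second_order_bound_general hx hξ hS hSS
  rw [← frobNorm_eq_norm, ← frobNorm_eq_norm] at hsharp
  have hsq : 0 ≤ frobNorm ξ ^ 2 := sq_nonneg _
  linarith [Real.sqrt_one_add_le (by linarith : -1 ≤ frobNorm ξ ^ 2)]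
end

section
/- Let r ≤ d, let x, y be real d×r matrices with xᵀx = I_r and yᵀy = I_r, and let N be any real d×r matrix. Set g := N − (1/2)x(xᵀN + Nᵀx) (the projection of N onto the tangent space at x). Then |⟨g, y − x⟩ − ⟨N, y − x⟩| ≤ (1/2) ‖N‖₂ ‖y − x‖_F², where ⟨A,B⟩ = trace(AᵀB) and ‖N‖₂ is the spectral norm of N. -/
open Matrix

/-- Spectral (operator) norm of a real matrix. -/
noncomputable def specNorm {m n : ℕ} (A : Matrix (Fin m) (Fin n) ℝ) : ℝ :=
  ‖LinearMap.toContinuousLinearMap (Matrix.toEuclideanLin A)‖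

/-- Frobenius inner product `⟨A, B⟩ = trace (AᵀB)` of real matrices. -/
noncomputable def finner {m n : ℕ} (A B : Matrix (Fin m) (Fin n) ℝ) : ℝ :=
  (Aᵀ * B).trace

/-!
Put `D = y - x`. The projection subtracts `x (xᴴ N + Nᴴ x) / 2`, whose inner product with `D` only
sees the Hermitian part of `xᴴ D`, because `xᴴ N + Nᴴ x` is Hermitian. As `xᴴ x = yᴴ y`, that part
is of second order in `D`: `xᴴ D + Dᴴ x = -Dᴴ D`. So the difference of the two inner products is
exactly `re tr (xᴴ N Dᴴ D) / 2`, a sum over the rows of `D` of quadratic forms of `xᴴ N`.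
-/

theorem conjTranspose_mul_sub_add_conjTranspose {R m n : Type*} [NonUnitalNonAssocRing R]
    [StarRing R] [Fintype m] {x y : Matrix m n R} (hxy : xᴴ * x = yᴴ * y) :
    xᴴ * (y - x) + (xᴴ * (y - x))ᴴ = -((y - x)ᴴ * (y - x)) := by
  simp only [conjTranspose_mul, conjTranspose_conjTranspose, conjTranspose_sub, Matrix.mul_sub,
    Matrix.sub_mul, hxy]
  abel

theorem trace_mul_conjTranspose_mul_self {R m n : Type*} [CommSemiring R] [StarRing R]
    [Fintype m] [Fintype n] (A : Matrix n n R) (D : Matrix m n R) :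
    (A * (Dᴴ * D)).trace = ∑ i, D i ⬝ᵥ A *ᵥ star (D i) := by
  rw [← Matrix.mul_assoc, trace_mul_comm]
  rfl

section L2Operator

open RCLike (re)
open WithLp (toLp)
open scoped Matrix.Norms.L2Operator

variable {𝕜 l m n : Type*} [RCLike 𝕜] [Fintype l] [Fintype m] [Fintype n]

/-- The orthogonal projection of `z` onto the tangent space at `x` of the Stiefel manifold
`xᴴ * x = 1`, with respect to the real inner product `re (Aᴴ * B).trace`. The formula is used for
every matrix `x`, although it is a projection only on the Stiefel manifold. -/
noncomputable def stiefelTangentProj (x z : Matrix m n 𝕜) : Matrix m n 𝕜 :=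
  z - (1 / 2 : ℝ) • (x * (xᴴ * z + zᴴ * x))

theorem re_trace_mul_conjTranspose_of_isHermitian {S : Matrix n n 𝕜} (hS : S.IsHermitian)
    (W : Matrix n n 𝕜) : re (S * Wᴴ).trace = re (S * W).trace :=
  calc re (S * Wᴴ).trace = re (W * S)ᴴ.trace := by rw [conjTranspose_mul, hS.eq]
    _ = re (S * W).trace := by
      rw [trace_conjTranspose, RCLike.star_def, RCLike.conj_re, trace_mul_comm]

theorem re_trace_mul_add_conjTranspose_mul_sub {x y : Matrix m n 𝕜} (hxy : xᴴ * x = yᴴ * y)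
    (N : Matrix m n 𝕜) :
    re ((x * (xᴴ * N + Nᴴ * x))ᴴ * (y - x)).trace =
      -re (xᴴ * N * ((y - x)ᴴ * (y - x))).trace := by
  set A := xᴴ * N with hA
  set W := xᴴ * (y - x) with hW
  set G := (y - x)ᴴ * (y - x)
  have hG : G.IsHermitian := isHermitian_conjTranspose_mul_self (y - x)
  have hS : (A + Aᴴ).IsHermitian := isHermitian_add_transpose_self A
  have hNx : Nᴴ * x = Aᴴ := by rw [hA, conjTranspose_mul, conjTranspose_conjTranspose]
  have hAG : re (Aᴴ * G).trace = re (A * G).trace := by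
    rw [trace_mul_comm, re_trace_mul_conjTranspose_of_isHermitian hG, trace_mul_comm]
  have htwice : 2 * re ((A + Aᴴ) * W).trace = -(2 * re (A * G).trace) :=
    calc 2 * re ((A + Aᴴ) * W).trace
        = re ((A + Aᴴ) * (W + Wᴴ)).trace := by
          rw [Matrix.mul_add, trace_add, map_add, re_trace_mul_conjTranspose_of_isHermitian hS,
            two_mul]
      _ = -re ((A + Aᴴ) * G).trace := by
          rw [conjTranspose_mul_sub_add_conjTranspose hxy, Matrix.mul_neg, trace_neg, map_neg]
      _ = -(2 * re (A * G).trace) := by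
          rw [Matrix.add_mul, trace_add, map_add, hAG, two_mul]
  rw [hNx, conjTranspose_mul, hS.eq, Matrix.mul_assoc, ← hW]
  linarith

theorem re_trace_stiefelTangentProj_sub {x y : Matrix m n 𝕜} (hxy : xᴴ * x = yᴴ * y)
    (N : Matrix m n 𝕜) :
    re ((stiefelTangentProj x N)ᴴ * (y - x)).trace - re (Nᴴ * (y - x)).trace =
      1 / 2 * re (xᴴ * N * ((y - x)ᴴ * (y - x))).trace := by
  rw [stiefelTangentProj, conjTranspose_sub, conjTranspose_smul, star_trivial, Matrix.sub_mul,
    Matrix.smul_mul, trace_sub, trace_smul, map_sub, RCLike.smul_re,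
    re_trace_mul_add_conjTranspose_mul_sub hxy]
  ring

variable [DecidableEq l] [DecidableEq n]

theorem norm_star_dotProduct_mulVec_le (A : Matrix m n 𝕜) (u : m → 𝕜) (v : n → 𝕜) :
    ‖star u ⬝ᵥ A *ᵥ v‖ ≤ ‖A‖ * (‖toLp 2 u‖ * ‖toLp 2 v‖) :=
  calc ‖star u ⬝ᵥ A *ᵥ v‖ = ‖inner 𝕜 (toLp 2 u) (toLp 2 (A *ᵥ v))‖ := by
        rw [EuclideanSpace.inner_toLp_toLp, dotProduct_comm]
    _ ≤ ‖toLp 2 u‖ * ‖toLp 2 (A *ᵥ v)‖ := norm_inner_le_norm _ _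
    _ ≤ ‖toLp 2 u‖ * (‖A‖ * ‖toLp 2 v‖) := by
        gcongr
        exact l2_opNorm_mulVec A (toLp 2 v)
    _ = ‖A‖ * (‖toLp 2 u‖ * ‖toLp 2 v‖) := by ring

theorem norm_trace_mul_conjTranspose_mul_self_le (A : Matrix n n 𝕜) (D : Matrix m n 𝕜) :
    ‖(A * (Dᴴ * D)).trace‖ ≤ ‖A‖ * ∑ i, ∑ j, ‖D i j‖ ^ 2 := by
  rw [trace_mul_conjTranspose_mul_self, Finset.mul_sum]
  refine norm_sum_le_of_le _ fun i _ => ?_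
  have hrow : ‖toLp 2 (star (D i))‖ * ‖toLp 2 (star (D i))‖ = ∑ j, ‖D i j‖ ^ 2 := by
    rw [← sq, EuclideanSpace.norm_sq_eq]
    simp only [Pi.star_apply, norm_star]
  simpa only [star_star, hrow] using norm_star_dotProduct_mulVec_le A (star (D i)) (star (D i))

theorem l2_opNorm_le_one_of_conjTranspose_mul_self_eq_one {x : Matrix m n 𝕜} (hx : xᴴ * x = 1) :
    ‖x‖ ≤ 1 := by
  have hsq : ‖x‖ * ‖x‖ ≤ 1 := by
    rw [← l2_opNorm_conjTranspose_mul_self, hx]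
    exact (IsStarProjection.one (Matrix n n 𝕜)).norm_le
  nlinarith [norm_nonneg x]

theorem l2_opNorm_conjTranspose_mul_le {x : Matrix m n 𝕜} (hx : xᴴ * x = 1) (N : Matrix m l 𝕜) :
    ‖xᴴ * N‖ ≤ ‖N‖ := by
  classical
  calc ‖xᴴ * N‖ ≤ ‖xᴴ‖ * ‖N‖ := l2_opNorm_mul xᴴ N
    _ = ‖x‖ * ‖N‖ := by rw [l2_opNorm_conjTranspose]
    _ ≤ ‖N‖ := mul_le_of_le_one_left (norm_nonneg N)
        (l2_opNorm_le_one_of_conjTranspose_mul_self_eq_one hx)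

theorem tangent_projection_inner_product_bound_general {x y : Matrix m n 𝕜}
    (hxy : xᴴ * x = yᴴ * y) (N : Matrix m n 𝕜) :
    |re ((stiefelTangentProj x N)ᴴ * (y - x)).trace - re (Nᴴ * (y - x)).trace| ≤
      1 / 2 * ‖xᴴ * N‖ * ∑ i, ∑ j, ‖(y - x) i j‖ ^ 2 := by
  rw [re_trace_stiefelTangentProj_sub hxy, abs_mul, abs_of_pos one_half_pos, mul_assoc]
  gcongr
  exact (RCLike.abs_re_le_norm _).trans (norm_trace_mul_conjTranspose_mul_self_le _ _)

theorem specNorm_eq_l2_opNorm {m n : ℕ} (A : Matrix (Fin m) (Fin n) ℝ) : specNorm A = ‖A‖ := rfl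

theorem specNorm_transpose_mul_le {m n : ℕ} {x : Matrix (Fin m) (Fin n) ℝ} (hx : xᵀ * x = 1)
    (N : Matrix (Fin m) (Fin n) ℝ) : specNorm (xᵀ * N) ≤ specNorm N := by
  rw [← conjTranspose_eq_transpose_of_trivial] at hx ⊢
  exact l2_opNorm_conjTranspose_mul_le hx N

end L2Operator

theorem frobNorm_sq {m n : ℕ} (A : Matrix (Fin m) (Fin n) ℝ) :
    frobNorm A ^ 2 = ∑ i, ∑ j, ‖A i j‖ ^ 2 := by
  simp only [Real.norm_eq_abs, sq_abs]
  exact Real.sq_sqrt (by positivity)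

/-- **Comparing the tangent-projected and Euclidean inner products.**
For `x, y ∈ St(d,r)`, any `N ∈ ℝ^{d×r}`, and `g = N − (1/2)x(xᵀN + Nᵀx)` the
projection of `N` onto the tangent space at `x`, one has
`|⟨g, y − x⟩ − ⟨N, y − x⟩| ≤ (1/2)‖N‖₂‖y − x‖_F²`. -/
theorem tangent_projection_inner_product_bound
    (d r : ℕ) (hdr : r ≤ d) (x y N : Matrix (Fin d) (Fin r) ℝ)
    (hx : xᵀ * x = 1) (hy : yᵀ * y = 1) :
    |finner (N - (1 / 2 : ℝ) • (x * (xᵀ * N + Nᵀ * x))) (y - x) - finner N (y - x)| ≤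
      (1 / 2 : ℝ) * specNorm N * (frobNorm (y - x)) ^ 2 := by
  have hgram : xᴴ * x = yᴴ * y := by
    simp only [conjTranspose_eq_transpose_of_trivial, hx, hy]
  have hbound := tangent_projection_inner_product_bound_general hgram N
  simp only [stiefelTangentProj, conjTranspose_eq_transpose_of_trivial, RCLike.re_to_real,
    ← frobNorm_sq, ← specNorm_eq_l2_opNorm] at hbound
  refine hbound.trans ?_
  gcongr
  exact specNorm_transpose_mul_le hx N
end
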